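/- Let (Q, 𝔖) be a hierarchically hyperbolic group with ⊑-maximal element S, and let X be a generating set of Q such that CS = Cay(Q, X) (with π_S the inclusion). Let H be a finitely generated group with finite generating set Y, and let φ : H → Q be a group homomorphism which is a quasi-isometric embedding with respect to the word metrics d_Y and d_X. Then there exists a constant C such that for every g ∈ Q and every U ∈ 𝔖 − {S}, the diameter of π_U(g·φ(H)) in CU is at most C. -/

import Mathlib

noncomputable section
open scoped Classical

/-! ### Basic coarse-geometric vocabulary -/

/-- The distance function of an explicitly given pseudometric structure. -/
def mdist {α : Type*} (m : PseudoMetricSpace α) (x y : α) : ℝ := @dist α m.toDist x y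

/-- Four-point (Gromov) hyperbolicity condition for a distance function. -/
def IsHypDist {α : Type*} (d : α → α → ℝ) (δ : ℝ) : Prop :=
  ∀ x y z w : α, d x y + d z w ≤ max (d x z + d y w) (d x w + d y z) + 2 * δ

/-- A discrete geodesic chain of length `n` for the distance function `d`. -/
def IsGeodChain {α : Type*} (d : α → α → ℝ) (n : ℕ) (p : ℕ → α) : Prop :=
  ∀ i ≤ n, ∀ j ≤ n, d (p i) (p j) = |(i : ℝ) - (j : ℝ)|

/-- `A` is `q`-quasi-convex for `d`: every (discrete) geodesic between points of `A`
stays within distance `q` of `A`. -/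
def QConv {α : Type*} (d : α → α → ℝ) (A : Set α) (q : ℝ) : Prop :=
  ∀ (n : ℕ) (p : ℕ → α), IsGeodChain d n p → p 0 ∈ A → p n ∈ A →
    ∀ i ≤ n, ∃ a ∈ A, d (p i) a ≤ q

/-- Hausdorff-distance bound for the distance function `d`. -/
def hdLE {α : Type*} (d : α → α → ℝ) (A B : Set α) (r : ℝ) : Prop :=
  (∀ a ∈ A, ∃ b ∈ B, d a b ≤ r) ∧ ∀ b ∈ B, ∃ a ∈ A, d a b ≤ r

/-- Finite Hausdorff distance. -/
def FinHD {α : Type*} (d : α → α → ℝ) (A B : Set α) : Prop := ∃ r : ℝ, hdLE d A B r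

/-! ### Word metrics -/

/-- The set of lengths of words in `A ∪ A⁻¹` representing `g`. -/
def relWords {G : Type*} [Group G] (A : Set G) (g : G) : Set ℕ :=
  {n | ∃ l : List G, l.length = n ∧ (∀ a ∈ l, a ∈ A ∨ a⁻¹ ∈ A) ∧ l.prod = g}

/-- `A` generates `G`. -/
def Generates {G : Type*} [Group G] (A : Set G) : Prop := ∀ g : G, (relWords A g).Nonempty

/-- The word metric on `G` associated with the (possibly infinite) set `A`. -/
def wdist {G : Type*} [Group G] (A : Set G) (x y : G) : ℝ :=
  ((sInf (relWords A (x⁻¹ * y)) : ℕ) : ℝ)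

/-- `G` is a (word-)hyperbolic group. -/
def IsHypGroup (G : Type*) [Group G] : Prop :=
  ∃ S : Finset G, Generates (S : Set G) ∧ ∃ δ ≥ (0:ℝ), IsHypDist (wdist (S : Set G)) δ

/-- Lengths of paths from `x` to `y` in the Cayley graph of the generating set `A`
avoiding edges whose two endpoints both lie in `K`. -/
def relPathLens {G : Type*} [Group G] (A K : Set G) (x y : G) : Set ℕ :=
  {n | ∃ p : List G, p.length = n + 1 ∧ p.head? = some x ∧ p.getLast? = some y ∧
        p.Chain' (fun u v => (u⁻¹ * v ∈ A ∨ v⁻¹ * u ∈ A) ∧ ¬(u ∈ K ∧ v ∈ K))}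

/-- The relative metric of Dahmani--Guirardel--Osin: the length of a shortest path
avoiding the edges of the complete subgraph on `K`. -/
def relDist {G : Type*} [Group G] (A K : Set G) (x y : G) : ℕ∞ :=
  sInf ((fun n : ℕ => (n : ℕ∞)) '' relPathLens A K x y)

/-- A family of subgroups `H i` is hyperbolically embedded in `G` with respect to `T`
(Dahmani--Guirardel--Osin): `Cay(G, T ⊔ ⊔ᵢ Hᵢ)` is hyperbolic and each relative
metric is proper. -/
structure HypEmbFamily (G : Type*) [Group G] {I : Type*} (H : I → Subgroup G)
    (T : Set G) : Prop where
  symm : ∀ t ∈ T, t⁻¹ ∈ T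
  gens : Generates (T ∪ ⋃ i, (H i : Set G))
  hyp : ∃ δ ≥ (0:ℝ), IsHypDist (wdist (T ∪ ⋃ i, (H i : Set G))) δ
  proper : ∀ i, ∀ h ∈ H i, ∀ n : ℕ,
      {h' : G | h' ∈ H i ∧
        relDist (T ∪ ⋃ j, (H j : Set G)) (H i : Set G) h h' ≤ (n : ℕ∞)}.Finite

/-! ### Hierarchically hyperbolic spaces -/

/-- A hierarchically hyperbolic space structure on the set `X` (Behrstock--Hagen--Sisto).
Coarse projections and relative projections are realized as coarse points. -/
structure HHSStruct (X : Type*) where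
  /-- The (quasigeodesic) metric on `X`. -/
  metX : PseudoMetricSpace X
  /-- The index set of domains. -/
  S : Type
  /-- The hyperbolic space attached to each domain. -/
  C : S → Type
  /-- The metric of each attached space. -/
  met : ∀ U, PseudoMetricSpace (C U)
  /-- `X` is a quasigeodesic space. -/
  quasigeodesic : ∃ q ≥ (1:ℝ), ∀ x y : X, ∃ f : ℝ → X,
    f 0 = x ∧ f (mdist metX x y) = y ∧
    ∀ s ∈ Set.Icc (0:ℝ) (mdist metX x y), ∀ t ∈ Set.Icc (0:ℝ) (mdist metX x y),
      (|s - t| - q) / q ≤ mdist metX (f s) (f t) ∧ mdist metX (f s) (f t) ≤ q * |s - t| + q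
  /-- The attached spaces are uniformly hyperbolic. -/
  hyperbolic : ∃ δ ≥ (0:ℝ), ∀ U, IsHypDist (mdist (met U)) δ
  /-- Projections. -/
  π : ∀ U, X → C U
  /-- Projections are uniformly coarsely Lipschitz. -/
  proj_lip : ∃ K ≥ (0:ℝ), ∀ U (x y : X),
    mdist (met U) (π U x) (π U y) ≤ K * mdist metX x y + K
  /-- Nesting. -/
  nest : S → S → Prop
  nest_refl : ∀ U, nest U U
  nest_antisymm : ∀ U V, nest U V → nest V U → U = V
  nest_trans : ∀ U V W, nest U V → nest V W → nest U W
  /-- The unique maximal element. -/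
  maxS : S
  nest_max : ∀ U, nest U maxS
  /-- Orthogonality. -/
  orth : S → S → Prop
  orth_symm : ∀ U V, orth U V → orth V U
  orth_irrefl : ∀ U, ¬ orth U U
  orth_nest : ∀ U V W, nest U V → orth V W → orth U W
  orth_not_nest : ∀ U V, orth U V → ¬ nest U V
  /-- Containers for orthogonal complements. -/
  container : ∀ T U, nest U T → (∃ V, nest V T ∧ orth V U) →
      ∃ W, nest W T ∧ W ≠ T ∧ ∀ V, nest V T → orth V U → nest V W
  /-- Relative projection `ρ^U_V` (meaningful when `U` is properly nested in `V`, or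
  `U` and `V` are transverse). -/
  ρ : S → ∀ V : S, C V
  /-- Downward relative projection `ρ^W_V : C W → C V` for `V` nested in `W`. -/
  ρdown : ∀ W V : S, C W → C V
  /-- Consistency (Behrstock) inequalities and `ρ`-compatibility. -/
  consistency : ∃ κ ≥ (0:ℝ),
    (∀ U V (x : X), ¬ orth U V → ¬ nest U V → ¬ nest V U →
       min (mdist (met V) (π V x) (ρ U V)) (mdist (met U) (π U x) (ρ V U)) ≤ κ) ∧
    (∀ U V (x : X), nest V U → V ≠ U →
       min (mdist (met U) (π U x) (ρ V U))
           (mdist (met V) (π V x) (ρdown U V (π U x))) ≤ κ) ∧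
    (∀ U V W, nest U V →
       ((nest V W ∧ V ≠ W) ∨ ((¬ orth V W ∧ ¬ nest V W ∧ ¬ nest W V) ∧ ¬ orth W U)) →
       mdist (met W) (ρ U W) (ρ V W) ≤ κ)
  /-- Finite complexity. -/
  complexity : ∃ n : ℕ, ∀ l : List S, l.Chain' (fun U V => nest U V ∧ U ≠ V) → l.length ≤ n
  /-- Large links. -/
  large_links : ∃ lam ≥ (1:ℝ), ∃ E ≥ (0:ℝ), ∀ W (x x' : X),
    ∃ Ts : Finset S, (Ts.card : ℝ) ≤ lam * mdist (met W) (π W x) (π W x') + lam ∧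
      (∀ Ti ∈ Ts, (nest Ti W ∧ Ti ≠ W) ∧
        mdist (met W) (π W x) (ρ Ti W) ≤ lam * mdist (met W) (π W x) (π W x') + lam) ∧
      (∀ V, nest V W → V ≠ W →
        (∃ Ti ∈ Ts, nest V Ti) ∨ mdist (met V) (π V x) (π V x') < E)
  /-- Bounded geodesic image. -/
  bgi : ∃ E ≥ (0:ℝ), ∀ W V, nest V W → V ≠ W →
    ∀ (n : ℕ) (p : ℕ → C W), IsGeodChain (mdist (met W)) n p →
      (∀ i ≤ n, ∀ j ≤ n, mdist (met V) (ρdown W V (p i)) (ρdown W V (p j)) ≤ E) ∨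
      ∃ i ≤ n, mdist (met W) (p i) (ρ V W) ≤ E
  /-- Partial realization. -/
  partial_realization : ∃ α ≥ (0:ℝ), ∀ (J : Finset S) (p : ∀ U, C U),
    (∀ U ∈ J, ∀ V ∈ J, U ≠ V → orth U V) →
    ∃ x : X, ∀ U ∈ J, mdist (met U) (π U x) (p U) ≤ α ∧
      (∀ V, nest U V → U ≠ V → mdist (met V) (π V x) (ρ U V) ≤ α) ∧
      (∀ W, ¬ orth U W → ¬ nest U W → ¬ nest W U → mdist (met W) (π W x) (ρ U W) ≤ α)
  /-- Uniqueness. -/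
  uniqueness : ∀ κ ≥ (0:ℝ), ∃ θ ≥ (0:ℝ), ∀ x y : X, mdist metX x y ≥ θ →
    ∃ U, mdist (met U) (π U x) (π U y) ≥ κ

/-- Hierarchical quasi-convexity of a subset `Y` with gauge `k`
(Behrstock--Hagen--Sisto, Definition 5.1). -/
def HierQC {X : Type*} (L : HHSStruct X) (Y : Set X) (k : ℝ → ℝ) : Prop :=
  (∀ U, QConv (mdist (L.met U)) ((L.π U) '' Y) (k 0)) ∧
  (∀ r ≥ (0:ℝ), ∀ x : X, (∀ U, ∃ y ∈ Y, mdist (L.met U) (L.π U x) (L.π U y) ≤ r) →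
    ∃ y ∈ Y, mdist L.metX x y ≤ k r)

/-- An HHS is normalized if all projections are uniformly coarsely onto. -/
def Normalized {X : Type*} (L : HHSStruct X) : Prop :=
  ∃ Cst ≥ (0:ℝ), ∀ U (c : L.C U), ∃ x : X, mdist (L.met U) c (L.π U x) ≤ Cst

/-! ### Hierarchically hyperbolic groups -/

/-- A hierarchically hyperbolic group structure on the group `Q`: an HHS structure on
`Q` with a word metric, with a cofinite action of `Q` by HHS automorphisms. -/
structure HHGStruct (Q : Type*) [Group Q] where
  /-- The underlying hierarchically hyperbolic space structure on `Q`. -/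
  hhs : HHSStruct Q
  /-- The metric is a word metric for a finite generating set. -/
  word : ∃ T : Finset Q, Generates (T : Set Q) ∧
    ∀ x y : Q, mdist hhs.metX x y = wdist (T : Set Q) x y
  /-- The action of `Q` on the index set. -/
  act : Q → hhs.S ≃ hhs.S
  act_one : ∀ U, act 1 U = U
  act_mul : ∀ g h U, act (g * h) U = act g (act h U)
  act_nest : ∀ g U V, hhs.nest U V ↔ hhs.nest (act g U) (act g V)
  act_orth : ∀ g U V, hhs.orth U V ↔ hhs.orth (act g U) (act g V)
  /-- The action on the attached hyperbolic spaces, by isometries. -/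
  actC : ∀ g U, hhs.C U → hhs.C (act g U)
  actC_isom : ∀ g U x y,
    mdist (hhs.met (act g U)) (actC g U x) (actC g U y) = mdist (hhs.met U) x y
  actC_onto : ∀ g U, Function.Surjective (actC g U)
  /-- Uniform coarse equivariance of the projections. -/
  act_proj : ∃ κ ≥ (0:ℝ), ∀ g U (x : Q),
    mdist (hhs.met (act g U)) (hhs.π (act g U) (g * x)) (actC g U (hhs.π U x)) ≤ κ
  /-- Finitely many orbits of domains. -/
  orbits : ∃ F : Finset hhs.S, ∀ U : hhs.S, ∃ g, ∃ V ∈ F, act g V = U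

/-- A homomorphism of hierarchically hyperbolic groups: a group homomorphism which is a
hieromorphism whose constituent maps are uniformly coarsely equivariant. -/
structure HHGHom {A B : Type*} [Group A] [Group B] (SA : HHGStruct A) (SB : HHGStruct B)
    (φ : A →* B) where
  fS : SA.hhs.S → SB.hhs.S
  inj : Function.Injective fS
  nest_iff : ∀ U V, SA.hhs.nest U V ↔ SB.hhs.nest (fS U) (fS V)
  orth_iff : ∀ U V, SA.hhs.orth U V ↔ SB.hhs.orth (fS U) (fS V)
  fC : ∀ U, SA.hhs.C U → SB.hhs.C (fS U)
  /-- The maps on hyperbolic spaces are uniform quasi-isometric embeddings. -/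
  qie : ∃ K ≥ (1:ℝ), ∀ U x y,
    mdist (SA.hhs.met U) x y ≤ K * mdist (SB.hhs.met (fS U)) (fC U x) (fC U y) + K ∧
    mdist (SB.hhs.met (fS U)) (fC U x) (fC U y) ≤ K * mdist (SA.hhs.met U) x y + K
  /-- Coarse commutation with the projections `π`. -/
  comm_π : ∃ κ ≥ (0:ℝ), ∀ U a,
    mdist (SB.hhs.met (fS U)) (SB.hhs.π (fS U) (φ a)) (fC U (SA.hhs.π U a)) ≤ κ
  /-- Coarse commutation with the relative projections `ρ`. -/
  comm_ρ : ∃ κ ≥ (0:ℝ), ∀ U V, U ≠ V → ¬ SA.hhs.orth U V →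
    mdist (SB.hhs.met (fS V)) (SB.hhs.ρ (fS U) (fS V)) (fC V (SA.hhs.ρ U V)) ≤ κ
  /-- Equivariance on index sets. -/
  equiv_S : ∀ g U, fS (SA.act g U) = SB.act (φ g) (fS U)
  /-- Uniform coarse equivariance on the hyperbolic spaces. -/
  equiv_C : ∃ κ ≥ (0:ℝ), ∀ g U x,
    mdist (SB.hhs.met (SB.act (φ g) (fS U)))
      (cast (congrArg SB.hhs.C (equiv_S g U)) (fC (SA.act g U) (SA.actC g U x)))
      (SB.actC (φ g) (fS U) (fC U x)) ≤ κ

/-- Fullness of a homomorphism of HHGs (as a hieromorphism). -/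
structure IsFull {A B : Type*} [Group A] [Group B] {SA : HHGStruct A} {SB : HHGStruct B}
    {φ : A →* B} (h : HHGHom SA SB φ) : Prop where
  /-- The maps on hyperbolic spaces are uniform quasi-isometries (coarsely onto). -/
  coarse_onto : ∃ ξ ≥ (0:ℝ), ∀ U c, ∃ x, mdist (SB.hhs.met (h.fS U)) c (h.fC U x) ≤ ξ
  /-- Domains nested in an image domain are images of nested domains. -/
  nest_lift : ∀ U V', SB.hhs.nest V' (h.fS U) → ∃ V, SA.hhs.nest V U ∧ h.fS V = V'

/-- A family of subgroups of an HHG is hierarchically hyperbolically embedded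
(Behrstock--Hagen--Sisto): `C S = Cay(Q, T)` with `π_S` the inclusion, `T ∩ Hᵢ`
generates `Hᵢ`, and the family is hyperbolically embedded in `(Q, T)`. -/
structure HHEmbedded {Q : Type*} [Group Q] (G : HHGStruct Q) {I : Type*}
    (H : I → Subgroup Q) (T : Set Q) : Prop where
  maxCay : ∀ x y : Q,
    mdist (G.hhs.met G.hhs.maxS) (G.hhs.π G.hhs.maxS x) (G.hhs.π G.hhs.maxS y) = wdist T x y
  maxBij : Function.Bijective (G.hhs.π G.hhs.maxS)
  genT : Generates T
  genHi : ∀ i, ∀ h ∈ H i, (relWords (T ∩ (H i : Set Q)) h).Nonempty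
  hypEmb : HypEmbFamily Q H T

/-!
A coset `g • φ(H)`, traced along a geodesic of `(H, Y)`, is a uniform quasi-geodesic of `C S`. By
stability, the `C S`-geodesic joining two of its points stays close to it, so the bounded geodesic
image axiom bounds the projection to `C U` of any stretch of the trace that stays far from `ρ^U_S`.
The times at which the trace is close to `ρ^U_S` lie in a window of uniformly bounded length, whose
projection is bounded because `π_U` is coarsely Lipschitz.
-/

/-! ### Gromov products -/

lemma IsHypDist.mono {α : Type*} {d : α → α → ℝ} {δ δ' : ℝ} (h : IsHypDist d δ) (hδ : δ ≤ δ') :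
    IsHypDist d δ' :=
  fun x y z w => (h x y z w).trans (by linarith)

section GromovProduct

variable {α : Type*} [PseudoMetricSpace α]

/-- The Gromov product `(x | y)_p`: in a hyperbolic space it measures, up to a constant, how far the
geodesics from `x` to `y` stay from `p`. -/
def gromovProd (p x y : α) : ℝ := (dist x p + dist y p - dist x y) / 2

lemma gromovProd_self (p x : α) : gromovProd p x x = dist x p := by
  simp [gromovProd]

lemma gromovProd_comm (p x y : α) : gromovProd p x y = gromovProd p y x := by
  simp only [gromovProd, dist_comm x y, add_comm]

lemma IsHypDist.min_gromovProd_sub_le {δ : ℝ} (h : IsHypDist (dist : α → α → ℝ) δ)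
    (p x y z : α) : min (gromovProd p x y) (gromovProd p y z) - δ ≤ gromovProd p x z := by
  have four_point := h x z y p
  rw [dist_comm z y] at four_point
  rcases max_choice (dist x y + dist z p) (dist x p + dist y z) with hmax | hmax
  · refine (sub_le_sub_right (min_le_left _ _) δ).trans ?_
    simp only [gromovProd]
    linarith
  · refine (sub_le_sub_right (min_le_right _ _) δ).trans ?_
    simp only [gromovProd]
    linarith

lemma IsHypDist.nonneg {δ : ℝ} (h : IsHypDist (dist : α → α → ℝ) δ) (x : α) : 0 ≤ δ := by
  simpa using h x x x x

lemma IsHypDist.le_gromovProd_of_le_of_le_of_le {δ e : ℝ} (h : IsHypDist (dist : α → α → ℝ) δ)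
    {p x y z w : α} (hxy : e ≤ gromovProd p x y) (hyz : e ≤ gromovProd p y z)
    (hzw : e ≤ gromovProd p z w) : e - 2 * δ ≤ gromovProd p x w := by
  have hδ := h.nonneg p
  have hyw : e - δ ≤ gromovProd p y w :=
    (sub_le_sub_right (le_min hyz hzw) δ).trans (h.min_gromovProd_sub_le p y z w)
  have hmin : e - δ ≤ min (gromovProd p x y) (gromovProd p y w) := le_min (by linarith) hyw
  linarith [h.min_gromovProd_sub_le p x y w]

/-- Halving the path `k` times reduces to single steps, at the cost of one `δ` per halving: this is
what makes a detour around a ball of radius `D` exponentially long in `D`. -/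
lemma IsHypDist.le_gromovProd_of_path {δ : ℝ} (h : IsHypDist (dist : α → α → ℝ) δ)
    {n : ℕ} {x : ℕ → α} {p : α} {c D : ℝ} (hc : 0 ≤ c)
    (hstep : ∀ i < n, dist (x i) (x (i + 1)) ≤ c) (hfar : ∀ i ≤ n, D ≤ dist (x i) p) (k : ℕ)
    {i j : ℕ} (hij : i ≤ j) (hj : j ≤ n) (hlen : j - i ≤ 2 ^ k) :
    D - c / 2 - δ * k ≤ gromovProd p (x i) (x j) := by
  induction k generalizing i j with
  | zero =>
    have hi_far := hfar i (hij.trans hj)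
    obtain rfl | rfl : j = i ∨ j = i + 1 := by rw [pow_zero] at hlen; omega
    · rw [gromovProd_self, Nat.cast_zero]
      linarith
    · have hj_far := hfar (i + 1) hj
      have := hstep i hj
      rw [gromovProd, Nat.cast_zero]
      linarith
  | succ k ih =>
    rw [pow_succ] at hlen
    let mid := i + (j - i) / 2
    have left : D - c / 2 - δ * k ≤ gromovProd p (x i) (x mid) :=
      ih (by omega) (by omega) (by omega)
    have right : D - c / 2 - δ * k ≤ gromovProd p (x mid) (x j) :=
      ih (by omega) (by omega) (by omega)
    have := h.min_gromovProd_sub_le p (x i) (x mid) (x j)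
    have := le_min left right
    push_cast
    linarith

end GromovProduct

/-! ### Discrete geodesics and quasi-geodesics -/

section QuasiGeodesics

variable {α : Type*} [PseudoMetricSpace α]

lemma dist_le_mul_of_step_le {u : ℕ → α} {n : ℕ} {N : ℝ}
    (hstep : ∀ i < n, dist (u i) (u (i + 1)) ≤ N) {i j : ℕ} (hij : i ≤ j) (hj : j ≤ n) :
    dist (u i) (u j) ≤ N * (j - i) := by
  have := dist_le_Ico_sum_of_dist_le (f := u) (d := fun _ => N) hij
    fun _ hk => hstep _ (hk.trans_le hj)
  simpa [Nat.cast_sub hij, mul_comm] using this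

lemma isGeodChain_of_step_le_one {p : ℕ → α} {n : ℕ}
    (hstep : ∀ i < n, dist (p i) (p (i + 1)) ≤ 1) (hn : (n : ℝ) ≤ dist (p 0) (p n)) :
    IsGeodChain dist n p := by
  have ordered : ∀ i j, i ≤ j → j ≤ n → dist (p i) (p j) = j - i := by
    intro i j hij hj
    have start := dist_le_mul_of_step_le hstep i.zero_le (hij.trans hj)
    have middle := dist_le_mul_of_step_le hstep hij hj
    have finish := dist_le_mul_of_step_le hstep hj le_rfl
    have := dist_triangle4 (p 0) (p i) (p j) (p n)
    push_cast at start
    linarith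
  intro i hi j hj
  rcases le_total i j with hij | hij
  · rw [ordered i j hij hj, abs_sub_comm, abs_of_nonneg (sub_nonneg.2 (Nat.cast_le.2 hij))]
  · rw [dist_comm, ordered j i hij hi, abs_of_nonneg (sub_nonneg.2 (Nat.cast_le.2 hij))]

lemma IsGeodChain.gromovProd_eq_zero {m : ℕ} {p : ℕ → α} (hp : IsGeodChain dist m p)
    {s t u : ℕ} (hst : s ≤ t) (htu : t ≤ u) (hu : u ≤ m) : gromovProd (p t) (p s) (p u) = 0 := by
  have hst' : (s : ℝ) ≤ t := Nat.cast_le.2 hst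
  have htu' : (t : ℝ) ≤ u := Nat.cast_le.2 htu
  rw [gromovProd, hp s (by omega) t (by omega), hp u hu t (by omega), hp s (by omega) u hu,
    abs_of_nonpos (by linarith), abs_of_nonneg (by linarith), abs_of_nonpos (by linarith)]
  ring

/-- A discrete quasi-geodesic of length `n`, with lower constants `(K, K)`. The upper inequality is
encoded by the bound `c` on the length of a step. -/
structure IsQuasiGeod (K c : ℝ) (n : ℕ) (x : ℕ → α) : Prop where
  abs_sub_le : ∀ i ≤ n, ∀ j ≤ n, |(i : ℝ) - j| ≤ K * dist (x i) (x j) + K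
  step_le : ∀ i < n, dist (x i) (x (i + 1)) ≤ c

namespace IsQuasiGeod

variable {K c : ℝ} {n : ℕ} {x : ℕ → α}

lemma nonneg (hx : IsQuasiGeod K c n x) : 0 ≤ K := by
  simpa using hx.abs_sub_le 0 n.zero_le 0 n.zero_le

lemma segment (hx : IsQuasiGeod K c n x) {i j : ℕ} (hij : i ≤ j) (hj : j ≤ n) :
    IsQuasiGeod K c (j - i) fun l => x (i + l) where
  abs_sub_le a ha b hb := by
    simpa using hx.abs_sub_le (i + a) (by omega) (i + b) (by omega)
  step_le a ha := hx.step_le (i + a) (by omega)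

lemma le_gromovProd {δ : ℝ} (h : IsHypDist (dist : α → α → ℝ) δ) (hc : 0 ≤ c)
    (hx : IsQuasiGeod K c n x) {p : α} {D : ℝ} (hfar : ∀ l ≤ n, D ≤ dist (x l) p)
    {i j k : ℕ} (hi : i ≤ n) (hj : j ≤ n) (hk : K * dist (x i) (x j) + K ≤ 2 ^ k) :
    D - c / 2 - δ * k ≤ gromovProd p (x i) (x j) := by
  wlog hij : i ≤ j generalizing i j
  · rw [gromovProd_comm]
    exact this hj hi (by rwa [dist_comm]) (le_of_not_ge hij)
  refine h.le_gromovProd_of_path hc hx.step_le hfar k hij hj ?_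
  have hlen := ((neg_le_abs _).trans (hx.abs_sub_le i hi j hj)).trans hk
  have : (j : ℝ) ≤ (i + 2 ^ k : ℕ) := by push_cast; linarith
  have := Nat.cast_le.1 this
  omega

end IsQuasiGeod

/-! ### Stability of quasi-geodesics -/

lemma exists_dist_le_and_le_gromovProd {n : ℕ} {x : ℕ → α} {p y : α} {D : ℝ}
    (hfar : ∀ l ≤ n, D ≤ dist (x l) p) (hnear : ∃ l ≤ n, dist y (x l) ≤ D)
    (hy : (∃ l ≤ n, y = x l) ∨ 2 * D ≤ dist y p) :
    ∃ l ≤ n, dist y (x l) ≤ D ∧ D ≤ gromovProd p y (x l) := by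
  obtain ⟨l, hl, hyl⟩ := hnear
  rcases hy with ⟨i, hi, rfl⟩ | hy
  · exact ⟨i, hi, by simpa using dist_nonneg.trans hyl, by simpa [gromovProd_self] using hfar i hi⟩
  · have := hfar l hl
    exact ⟨l, hl, hyl, by rw [gromovProd]; linarith⟩

/-- Around the point `p t` of the geodesic farthest from the quasi-geodesic, cut the geodesic at
distance about `2 * D` on both sides: the portion of the quasi-geodesic joining the cut points stays
outside the ball of radius `D` around `p t`, yet its length is linear in `D`. -/
lemma IsQuasiGeod.farthest_dist_le {δ K c : ℝ} (h : IsHypDist (dist : α → α → ℝ) δ)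
    (hc : 0 ≤ c) {n : ℕ} {x : ℕ → α} (hx : IsQuasiGeod K c n x) {m : ℕ} {p : ℕ → α}
    (hp : IsGeodChain dist m p) (hp_zero : p 0 = x 0) (hp_last : p m = x n) {t : ℕ} (ht : t ≤ m)
    {D : ℝ} (hfar : ∀ l ≤ n, D ≤ dist (x l) (p t))
    (hnear : ∀ s ≤ m, ∃ l ≤ n, dist (p s) (x l) ≤ D)
    {k : ℕ} (hk : 6 * K * D + 3 * K ≤ 2 ^ k) : D ≤ c / 2 + 2 * δ + δ * k := by
  have hD : 0 ≤ D := let ⟨_, _, hl⟩ := hnear t ht; dist_nonneg.trans hl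
  let M := ⌈2 * D⌉₊
  have hM : 2 * D ≤ M := Nat.le_ceil _
  have hM' : (M : ℝ) < 2 * D + 1 := Nat.ceil_lt_add_one (by linarith)
  let s := t - M
  let u := min (t + M) m
  have hsu : dist (p s) (p u) ≤ 4 * D + 2 := by
    have hs_le : (s : ℝ) ≤ u := Nat.cast_le.2 (by omega)
    have hu_le : (u : ℝ) ≤ (s + 2 * M : ℕ) := Nat.cast_le.2 (by omega)
    push_cast at hu_le
    rw [hp s (by omega) u (by omega), abs_le]
    constructor <;> linarith
  obtain ⟨i, hi, hsi, hDi⟩ := exists_dist_le_and_le_gromovProd hfar (hnear s (by omega)) <| by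
    rcases le_total t M with htM | htM
    · exact .inl ⟨0, n.zero_le, by rw [show s = 0 by omega, hp_zero]⟩
    · right
      rw [dist_comm, hp t ht s (by omega), Nat.cast_sub htM]
      simpa using hM
  obtain ⟨j, hj, huj, hDj⟩ := exists_dist_le_and_le_gromovProd hfar (hnear u (by omega)) <| by
    rcases le_total m (t + M) with htM | htM
    · exact .inl ⟨n, le_rfl, by rw [show u = m by omega, hp_last]⟩
    · right
      rw [hp u (by omega) t ht, show u = t + M by omega]
      simpa using hM
  have hij : dist (x i) (x j) ≤ 6 * D + 2 := by
    have := dist_triangle4_left (p s) (p u) (x i) (x j)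
    linarith
  have path_prod : D - c / 2 - δ * k ≤ gromovProd (p t) (x i) (x j) := by
    refine hx.le_gromovProd h hc hfar hi hj ((?_ : _ ≤ 6 * K * D + 3 * K).trans hk)
    linarith [mul_le_mul_of_nonneg_left hij hx.nonneg]
  have geod_prod := hp.gromovProd_eq_zero (s := s) (t := t) (u := u)
    (by omega) (by omega) (by omega)
  have hδk : 0 ≤ δ * k := mul_nonneg (h.nonneg (p t)) k.cast_nonneg
  rw [gromovProd_comm] at hDj
  have four_products := h.le_gromovProd_of_le_of_le_of_le (x := p s) (w := p u) (by linarith)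
    path_prod (by linarith)
  linarith

open Asymptotics Filter in
lemma exists_bound_of_le_of_le_two_pow {A δ : ℝ} (hA : 0 ≤ A) (hδ : 0 < δ) (B c : ℝ) :
    ∃ D₀ : ℝ, ∀ D : ℝ, (∀ k : ℕ, A * D + B ≤ 2 ^ k → D ≤ c + δ * k) → D ≤ D₀ := by
  have linear_le_pow : ∀ᶠ k : ℕ in atTop, A * (c + δ * (k + 1)) + B ≤ 2 ^ k := by
    have linear : (fun k : ℕ => A * δ * (k : ℝ)) =o[atTop] fun k => (2 : ℝ) ^ k :=
      (isLittleO_coe_const_pow_of_one_lt one_lt_two).const_mul_left _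
    have const : (fun _ : ℕ => A * (c + δ) + B) =o[atTop] fun k => (2 : ℝ) ^ k :=
      isLittleO_const_left.2 <| .inr <|
        tendsto_norm_atTop_atTop.comp (tendsto_pow_atTop_atTop_of_one_lt one_lt_two)
    filter_upwards [(linear.add const).bound one_pos] with k hk
    rw [one_mul, Real.norm_of_nonneg (by positivity : (0 : ℝ) ≤ 2 ^ k)] at hk
    linarith [(le_abs_self _).trans hk]
  obtain ⟨k₀, hk₀⟩ := eventually_atTop.1 linear_le_pow
  refine ⟨c + δ * (k₀ + 1), fun D hD => ?_⟩
  by_contra! hlt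
  let k := ⌈(D - c) / δ⌉₊ - 1
  have hk₀_lt : k₀ + 1 < ⌈(D - c) / δ⌉₊ := by
    rw [Nat.lt_ceil, lt_div_iff₀ hδ]
    push_cast
    linarith
  have lower : c + δ * k < D := by
    have : k < ⌈(D - c) / δ⌉₊ := by omega
    rw [Nat.lt_ceil, lt_div_iff₀ hδ] at this
    linarith
  have upper : D ≤ c + δ * (k + 1) := by
    have := Nat.le_ceil ((D - c) / δ)
    rw [show ⌈(D - c) / δ⌉₊ = k + 1 by omega, div_le_iff₀ hδ] at this
    push_cast at this
    linarith
  have := hD k (by linarith [hk₀ k (by omega), mul_le_mul_of_nonneg_left upper hA])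
  linarith

theorem IsQuasiGeod.exists_dist_le_of_isGeodChain {δ K c : ℝ}
    (h : IsHypDist (dist : α → α → ℝ) δ) (hK : 0 ≤ K) (hc : 0 ≤ c) :
    ∃ D₀ : ℝ, ∀ (n : ℕ) (x : ℕ → α), IsQuasiGeod K c n x →
      ∀ (m : ℕ) (p : ℕ → α), IsGeodChain dist m p → p 0 = x 0 → p m = x n →
        ∀ t ≤ m, ∃ l ≤ n, dist (p t) (x l) ≤ D₀ := by
  have hδ : 0 < max δ 1 := one_pos.trans_le (le_max_right _ _)
  obtain ⟨D₀, hD₀⟩ := exists_bound_of_le_of_le_two_pow (A := 6 * K) (by positivity) hδ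
    (3 * K) (c / 2 + 2 * max δ 1)
  refine ⟨D₀, fun n x hx m p hp hp_zero hp_last s hs => ?_⟩
  have nearest (t : ℕ) :=
    Set.exists_min_image (Set.Iic n) (fun l => dist (p t) (x l)) (Set.finite_Iic n) ⟨0, n.zero_le⟩
  choose near near_le le_dist using nearest
  obtain ⟨t, ht, hmax⟩ := Set.exists_max_image (Set.Iic m) (fun t => dist (p t) (x (near t)))
    (Set.finite_Iic m) ⟨0, m.zero_le⟩
  refine ⟨near s, near_le s, (hmax s hs).trans (hD₀ _ fun k hk => ?_)⟩
  refine hx.farthest_dist_le (h.mono (le_max_left δ 1)) hc hp hp_zero hp_last ht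
    (fun l hl => ?_) (fun s hs => ⟨near s, near_le s, hmax s hs⟩) hk
  rw [dist_comm (x l)]
  exact le_dist t l hl

/-- The marked times all lie in a window of length `2 * (M + 1)` around any one of them. -/
lemma dist_le_of_unmarked_segments {u : ℕ → α} {n M : ℕ} {N B : ℝ} {marked : ℕ → Prop}
    (hN : 0 ≤ N) (hB : 0 ≤ B) (hstep : ∀ i < n, dist (u i) (u (i + 1)) ≤ N)
    (hmarked : ∀ i ≤ n, ∀ j ≤ n, marked i → marked j → j ≤ i + M)
    (hseg : ∀ i j, i ≤ j → j ≤ n → dist (u i) (u j) ≤ B ∨ ∃ l, i ≤ l ∧ l ≤ j ∧ marked l) :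
    dist (u 0) (u n) ≤ 2 * B + N * (2 * (M + 1)) := by
  have hNM : 0 ≤ N * (2 * (M + 1)) := by positivity
  rcases hseg 0 n n.zero_le le_rfl with hle | ⟨i, -, hi, hmi⟩
  · linarith
  let a := i - (M + 1)
  let b := min (i + (M + 1)) n
  have before : dist (u 0) (u a) ≤ B := by
    rcases hseg 0 a a.zero_le (by omega) with hle | ⟨l, -, hl, hml⟩
    · exact hle
    · have := hmarked l (by omega) i hi hml hmi
      rwa [show a = 0 by omega, dist_self]
  have after : dist (u b) (u n) ≤ B := by
    rcases hseg b n (by omega) le_rfl with hle | ⟨l, hbl, hl, hml⟩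
    · exact hle
    · have := hmarked i hi l hl hmi hml
      rwa [show b = n by omega, dist_self]
  have window : dist (u a) (u b) ≤ N * (2 * (M + 1)) := by
    refine (dist_le_mul_of_step_le hstep (by omega) (by omega)).trans ?_
    have : (b : ℝ) ≤ (a + 2 * (M + 1) : ℕ) := Nat.cast_le.2 (by omega)
    push_cast at this
    gcongr
    linarith
  linarith [dist_triangle4 (u 0) (u a) (u b) (u n)]

end QuasiGeodesics

/-! ### Geodesics for word metrics -/

section WordMetric

variable {G : Type*} [Group G] {A : Set G}

lemma wdist_mul_left (A : Set G) (g x y : G) : wdist A (g * x) (g * y) = wdist A x y := by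
  simp only [wdist, mul_inv_rev, mul_assoc, inv_mul_cancel_left]

lemma wdist_mul_prod_le (x : G) {l : List G} (hl : ∀ a ∈ l, a ∈ A ∨ a⁻¹ ∈ A) :
    wdist A x (x * l.prod) ≤ l.length :=
  Nat.cast_le.2 (Nat.sInf_le ⟨l, rfl, hl, (inv_mul_cancel_left x _).symm⟩)

lemma exists_prod_length_eq_wdist (hA : Generates A) (x y : G) :
    ∃ l : List G, (l.length : ℝ) = wdist A x y ∧ (∀ a ∈ l, a ∈ A ∨ a⁻¹ ∈ A) ∧
      x * l.prod = y := by
  obtain ⟨l, hlen, hl, hprod⟩ := Nat.sInf_mem (hA (x⁻¹ * y))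
  exact ⟨l, congrArg Nat.cast hlen, hl, by rw [hprod, mul_inv_cancel_left]⟩

lemma wdist_self (A : Set G) (x : G) : wdist A x x = 0 := by
  have := wdist_mul_prod_le (A := A) x (l := []) (by simp)
  exact le_antisymm (by simpa using this) (Nat.cast_nonneg _)

lemma wdist_le_wdist_swap (hA : Generates A) (x y : G) : wdist A y x ≤ wdist A x y := by
  obtain ⟨l, hlen, hl, rfl⟩ := exists_prod_length_eq_wdist hA x y
  have := wdist_mul_prod_le (A := A) (x * l.prod) (l := (l.map (·⁻¹)).reverse)
    (by simpa using fun a ha => by simpa [or_comm] using hl a⁻¹ ha)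
  rw [← List.prod_inv_reverse, mul_inv_cancel_right] at this
  simpa [← hlen] using this

lemma wdist_triangle (hA : Generates A) (x y z : G) :
    wdist A x z ≤ wdist A x y + wdist A y z := by
  obtain ⟨l, hlen, hl, rfl⟩ := exists_prod_length_eq_wdist hA x y
  obtain ⟨l', hlen', hl', rfl⟩ := exists_prod_length_eq_wdist hA (x * l.prod) z
  have := wdist_mul_prod_le (A := A) x (l := l ++ l')
    fun a ha => (List.mem_append.1 ha).elim (hl a) (hl' a)
  rwa [List.prod_append, ← mul_assoc, List.length_append, Nat.cast_add, hlen, hlen'] at this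

/-- The word metric `wdist A` as a pseudometric structure, which makes the triangle-inequality
lemmas of metric spaces available for it. -/
abbrev wordMetric (hA : Generates A) : PseudoMetricSpace G where
  dist := wdist A
  dist_self := wdist_self A
  dist_comm x y := le_antisymm (wdist_le_wdist_swap hA y x) (wdist_le_wdist_swap hA x y)
  dist_triangle := wdist_triangle hA

lemma exists_isGeodChain_wdist (hA : Generates A) (x y : G) :
    ∃ (n : ℕ) (w : ℕ → G), IsGeodChain (wdist A) n w ∧ w 0 = x ∧ w n = y := by
  obtain ⟨l, hlen, hl, rfl⟩ := exists_prod_length_eq_wdist hA x y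
  let := wordMetric hA
  refine ⟨l.length, fun i => x * (l.take i).prod, isGeodChain_of_step_le_one (fun i hi => ?_) ?_,
    by simp, by simp⟩
  · have := wdist_mul_prod_le (A := A) (x * (l.take i).prod) (l := [l[i]])
      (by simpa using hl _ (List.getElem_mem hi))
    rwa [List.prod_singleton, mul_assoc, ← List.prod_take_succ l i hi, List.length_singleton,
      Nat.cast_one] at this
  · simp only [List.take_zero, List.prod_nil, mul_one, List.take_length]
    exact hlen.le

open scoped Pointwise in
lemma exists_map_le_of_wdist_le_one {H : Type*} [Group H] {d : G → G → ℝ}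
    (hd : ∀ g x y, d (g * x) (g * y) = d x y) {Y : Set H} (hfin : Y.Finite) (hY : Generates Y)
    (φ : H →* G) :
    ∃ N ≥ (0 : ℝ), ∀ a b, wdist Y a b ≤ 1 → ∀ g, d (g * φ a) (g * φ b) ≤ N := by
  obtain ⟨N, hN⟩ := ((hfin.union hfin.inv).insert 1).image (fun h => d 1 (φ h)) |>.bddAbove
  refine ⟨max N 0, le_max_right _ _, fun a b hab g =>
    (hN ⟨a⁻¹ * b, ?_, ?_⟩).trans (le_max_left _ _)⟩
  · obtain ⟨l, hlen, hl, rfl⟩ := exists_prod_length_eq_wdist hY a b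
    rw [← hlen, Nat.cast_le_one] at hab
    match l with
    | [] => simp
    | [h] => simpa using .inr (hl h (by simp))
  · simp only
    rw [← hd (g * φ a)]
    simp [mul_assoc]

end WordMetric

/-! ### Projections of quasi-geodesics to nested domains -/

section Projections

attribute [local instance] HHSStruct.met

lemma mdist_eq_dist {α : Type*} [m : PseudoMetricSpace α] : mdist m = dist := rfl

namespace HHSStruct

variable {Z : Type*} (L : HHSStruct Z)

lemma exists_dist_proj_le_or_near_of_isGeodChain :
    ∃ B ≥ (0 : ℝ), ∃ R : ℝ, ∀ W V, L.nest V W → V ≠ W → ∀ (m : ℕ) (p : ℕ → L.C W),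
      IsGeodChain dist m p → ∀ x y, p 0 = L.π W x → p m = L.π W y →
        dist (L.π V x) (L.π V y) ≤ B ∨ ∃ t ≤ m, dist (p t) (L.ρ V W) ≤ R := by
  obtain ⟨κ, hκ, -, consistency, -⟩ := L.consistency
  obtain ⟨E, hE, bgi⟩ := L.bgi
  simp only [mdist_eq_dist, min_le_iff] at consistency bgi
  refine ⟨κ + E + κ, by positivity, max κ E, fun W V hVW hne m p hp x y hx hy => ?_⟩
  rcases consistency W V x hVW hne with hxρ | hxπ
  · exact .inr ⟨0, m.zero_le, hx ▸ hxρ.trans (le_max_left _ _)⟩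
  rcases consistency W V y hVW hne with hyρ | hyπ
  · exact .inr ⟨m, le_rfl, hy ▸ hyρ.trans (le_max_left _ _)⟩
  rcases bgi W V hVW hne m p hp with hdiam | ⟨t, ht, hnear⟩
  · left
    have hxy := hdiam 0 m.zero_le m le_rfl
    rw [hx, hy] at hxy
    rw [dist_comm] at hyπ
    exact (dist_triangle4 _ _ _ _).trans (add_le_add_three hxπ hxy hyπ)
  · exact .inr ⟨t, ht, hnear.trans (le_max_right _ _)⟩

lemma exists_dist_proj_le_or_near_of_isQuasiGeod {W : L.S}
    (hgeod : ∀ x y, ∃ m p, IsGeodChain dist m p ∧ p 0 = L.π W x ∧ p m = L.π W y)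
    {K c : ℝ} (hK : 0 ≤ K) (hc : 0 ≤ c) :
    ∃ B ≥ (0 : ℝ), ∃ R : ℝ, ∀ V, L.nest V W → V ≠ W → ∀ (n : ℕ) (x : ℕ → Z),
      IsQuasiGeod K c n (fun i => L.π W (x i)) →
        dist (L.π V (x 0)) (L.π V (x n)) ≤ B ∨ ∃ l ≤ n, dist (L.π W (x l)) (L.ρ V W) ≤ R := by
  obtain ⟨δ, -, hyp⟩ := L.hyperbolic
  obtain ⟨D₀, stable⟩ := IsQuasiGeod.exists_dist_le_of_isGeodChain (hyp W) hK hc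
  obtain ⟨B, hB, R, bgi⟩ := L.exists_dist_proj_le_or_near_of_isGeodChain
  refine ⟨B, hB, D₀ + R, fun V hVW hne n x hx => ?_⟩
  obtain ⟨m, p, hp, hp_zero, hp_last⟩ := hgeod (x 0) (x n)
  refine (bgi W V hVW hne m p hp _ _ hp_zero hp_last).imp_right fun ⟨t, ht, hnear⟩ => ?_
  obtain ⟨l, hl, hpx⟩ := stable n _ hx m p hp hp_zero hp_last t ht
  exact ⟨l, hl, (dist_triangle_left _ _ (p t)).trans (add_le_add hpx hnear)⟩

theorem exists_dist_proj_le_of_isQuasiGeod {W : L.S}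
    (hgeod : ∀ x y, ∃ m p, IsGeodChain dist m p ∧ p 0 = L.π W x ∧ p m = L.π W y)
    {K c N : ℝ} (hK : 0 ≤ K) (hc : 0 ≤ c) (hN : 0 ≤ N) :
    ∃ C ≥ (0 : ℝ), ∀ V, L.nest V W → V ≠ W → ∀ (n : ℕ) (x : ℕ → Z),
      IsQuasiGeod K c n (fun i => L.π W (x i)) →
      (∀ i < n, mdist L.metX (x i) (x (i + 1)) ≤ N) →
        dist (L.π V (x 0)) (L.π V (x n)) ≤ C := by
  obtain ⟨P, hP, lipschitz⟩ := L.proj_lip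
  obtain ⟨B, hB, R, near⟩ := L.exists_dist_proj_le_or_near_of_isQuasiGeod hgeod hK hc
  let M := ⌈K * (R + R) + K⌉₊
  refine ⟨2 * B + (P * N + P) * (2 * (M + 1)), by positivity, fun V hVW hne n x hx hstep => ?_⟩
  refine dist_le_of_unmarked_segments (marked := fun l => dist (L.π W (x l)) (L.ρ V W) ≤ R)
    (u := fun i => L.π V (x i)) (by positivity) hB (fun i hi => ?_) (fun i hi j hj hiR hjR => ?_)
    fun i j hij hj => ?_
  · exact (lipschitz V _ _).trans (by gcongr; exact hstep i hi)
  · have hR : dist (L.π W (x j)) (L.π W (x i)) ≤ R + R :=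
      (dist_triangle_right _ _ _).trans (add_le_add hjR hiR)
    have : (j : ℝ) - i ≤ M := calc
      (j : ℝ) - i ≤ |(j : ℝ) - i| := le_abs_self _
      _ ≤ K * dist (L.π W (x j)) (L.π W (x i)) + K := hx.abs_sub_le j hj i hi
      _ ≤ K * (R + R) + K := by gcongr
      _ ≤ M := Nat.le_ceil _
    exact_mod_cast sub_le_iff_le_add'.1 this
  · rcases near V hVW hne (j - i) (fun l => x (i + l)) (hx.segment hij hj) with hle | ⟨l, hl, hlR⟩
    · left
      simpa [Nat.add_sub_cancel' hij] using hle
    · exact .inr ⟨i + l, by omega, by omega, hlR⟩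

end HHSStruct

theorem coset_projections_uniformly_bounded_general {Q : Type*} [Group Q] (L : HHSStruct Q)
    (hinv : ∀ g x y, mdist L.metX (g * x) (g * y) = mdist L.metX x y)
    {X : Set Q} (hX : Generates X) {W : L.S}
    (hcay : ∀ x y, mdist (L.met W) (L.π W x) (L.π W y) = wdist X x y)
    {H : Type*} [Group H] {Y : Set H} (hfin : Y.Finite) (hY : Generates Y) (φ : H →* Q)
    {K : ℝ} (hφ : ∀ a b, wdist Y a b ≤ K * wdist X (φ a) (φ b) + K) :
    ∃ C ≥ (0 : ℝ), ∀ g V, L.nest V W → V ≠ W →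
      ∀ a b, mdist (L.met V) (L.π V (g * φ a)) (L.π V (g * φ b)) ≤ C := by
  have hK : 0 ≤ K := by simpa [wdist_self] using hφ 1 1
  obtain ⟨c, hc, X_step⟩ := exists_map_le_of_wdist_le_one (wdist_mul_left X) hfin hY φ
  obtain ⟨N, hN, metX_step⟩ := exists_map_le_of_wdist_le_one hinv hfin hY φ
  have hgeod (x y : Q) : ∃ m p, IsGeodChain dist m p ∧ p 0 = L.π W x ∧ p m = L.π W y := by
    obtain ⟨m, v, hv, rfl, rfl⟩ := exists_isGeodChain_wdist hX x y
    exact ⟨m, fun t => L.π W (v t), fun i hi j hj => (hcay _ _).trans (hv i hi j hj), rfl, rfl⟩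
  obtain ⟨C, hC, bound⟩ := L.exists_dist_proj_le_of_isQuasiGeod hgeod hK hc hN
  refine ⟨C, hC, fun g V hVW hne a b => ?_⟩
  obtain ⟨n, w, hw, rfl, rfl⟩ := exists_isGeodChain_wdist hY a b
  have w_step (i : ℕ) (hi : i < n) : wdist Y (w i) (w (i + 1)) ≤ 1 := by
    simp [hw i hi.le (i + 1) hi]
  refine bound V hVW hne n (fun i => g * φ (w i)) ⟨fun i hi j hj => ?_, fun i hi => ?_⟩
    fun i hi => metX_step _ _ (w_step i hi) g
  · rw [← hw i hi j hj, ← mdist_eq_dist, hcay, wdist_mul_left]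
    exact hφ _ _
  · exact (hcay _ _).trans_le (X_step _ _ (w_step i hi) g)

end Projections

/-- Lemma `lem: The element of H projects uniformly on the U`.
Let `(Q, 𝔖)` be an HHG with maximal element `S` such that `C S = Cay(Q, X)` with `π_S`
the inclusion.  If `H` is a finitely generated group and `φ : H → Q` is a group
homomorphism which is a quasi-isometric embedding for the word metrics `d_Y` and `d_X`,
then there is a constant `C` such that for every `g ∈ Q` and every non-maximal domain
`U`, the projection of the coset `g·φ(H)` to `C U` has diameter at most `C`. -/
theorem coset_projections_uniformly_bounded
    {Q : Type} [Group Q] (G : HHGStruct Q) (X : Set Q)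
    (hgenX : Generates X)
    (hcay : ∀ x y : Q, mdist (G.hhs.met G.hhs.maxS)
      (G.hhs.π G.hhs.maxS x) (G.hhs.π G.hhs.maxS y) = wdist X x y)
    (hbij : Function.Bijective (G.hhs.π G.hhs.maxS))
    {H : Type} [Group H] (Y : Finset H) (hgenY : Generates (Y : Set H))
    (φ : H →* Q)
    (hqie : ∃ K ≥ (1:ℝ), ∀ a b : H,
      wdist (Y : Set H) a b ≤ K * wdist X (φ a) (φ b) + K ∧
      wdist X (φ a) (φ b) ≤ K * wdist (Y : Set H) a b + K) :
    ∃ C ≥ (0:ℝ), ∀ (g : Q) (U : G.hhs.S), U ≠ G.hhs.maxS →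
      ∀ a b : H, mdist (G.hhs.met U) (G.hhs.π U (g * φ a)) (G.hhs.π U (g * φ b)) ≤ C := by
  obtain ⟨T, -, hword⟩ := G.word
  obtain ⟨K, -, hK⟩ := hqie
  obtain ⟨C, hC, bound⟩ := coset_projections_uniformly_bounded_general G.hhs
    (by simp [hword, wdist_mul_left]) hgenX hcay Y.finite_toSet hgenY φ fun a b => (hK a b).1
  exact ⟨C, hC, fun g U hU => bound g U (G.hhs.nest_max U) hU⟩
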